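/- arXiv:2010.14172 — 7 statements merged into one kernel-verified Lean document; each statement's English description precedes it below -/
import Mathlib

section
/- Fix integers d ≥ 0 and n ≥ 1 with n odd. The radical of the quadratic form Q_n, i.e. the set of v ∈ (ℂ^{d+1})^n such that B(v,v') = 0 for all v', where B(v,v') := Q_n(v+v') − Q_n(v) − Q_n(v') is the polar bilinear form of Q_n, is exactly the diagonal subspace {(z,z,…,z) : z ∈ ℂ^{d+1}}. In particular, Q_n has nullity 2(d+1) as a real quadratic form. -/
/-!
Since `⟨a, i b⟩ = -⟨b, i a⟩`, reindexing the cyclic sum puts the polar form into the shape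
`B(v, v') = (1/2) ∑ ⟨v'_k, i (v_{k+1} - v_{k-1})⟩` (`polar_Qform`). Testing against
`v'_k = i (v_{k+1} - v_{k-1})` gives a sum of squared norms, so `v` is in the radical iff
`v_{k+1} = v_{k-1}` for all `k`. As `n` is odd, `2` generates `ℤ/n`, hence `v` is constant.
The diagonal is the injective image of `ℂ^{d+1}`, of real dimension `2(d+1)`.
-/

open scoped BigOperators

/-- Cyclic successor on `Fin n` (the convention `v_{n+1} := v_1`). -/
def csucc {n : ℕ} (k : Fin n) : Fin n := ⟨((k : ℕ) + 1) % n, Nat.mod_lt _ k.pos⟩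

/-- The real inner product `⟨z,w⟩ = Re ∑ z_j conj (w_j)` on `ℂ^{d+1}`. -/
noncomputable def rinner {d : ℕ} (z w : Fin (d + 1) → ℂ) : ℝ :=
  ∑ j, (z j * (starRingEnd ℂ) (w j)).re

/-- The quadratic form `Q_n(v) = (1/2) ∑ ⟨v_k, i v_{k+1}⟩` with cyclic convention. -/
noncomputable def Qform (d n : ℕ) (v : Fin n → (Fin (d + 1) → ℂ)) : ℝ :=
  (1 / 2 : ℝ) * ∑ k : Fin n, rinner (v k) (Complex.I • v (csucc k))

theorem csucc_eq_add_one {m : ℕ} (k : Fin (m + 1)) : csucc k = k + 1 := by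
  ext
  simp [csucc, Fin.val_add]

theorem rinner_add_left {d : ℕ} (a b c : Fin (d + 1) → ℂ) :
    rinner (a + b) c = rinner a c + rinner b c := by
  simp [rinner, add_mul, Finset.sum_add_distrib]

theorem rinner_add_right {d : ℕ} (a b c : Fin (d + 1) → ℂ) :
    rinner a (b + c) = rinner a b + rinner a c := by
  simp only [rinner, Pi.add_apply, map_add, mul_add, Complex.add_re, Finset.sum_add_distrib]

/-- The form `⟨a, i b⟩` is alternating, being a multiple of the standard symplectic form. -/
theorem rinner_I_smul_swap {d : ℕ} (a b : Fin (d + 1) → ℂ) :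
    rinner a (Complex.I • b) = -rinner b (Complex.I • a) := by
  simp only [rinner, ← Finset.sum_neg_distrib]
  refine Finset.sum_congr rfl fun j _ => ?_
  simp
  ring

theorem rinner_I_smul_sub {d : ℕ} (a b c : Fin (d + 1) → ℂ) :
    rinner a (Complex.I • (b - c))
      = rinner a (Complex.I • b) - rinner a (Complex.I • c) := by
  have h := rinner_add_right a (Complex.I • (b - c)) (Complex.I • c)
  rw [← smul_add, sub_add_cancel] at h
  linarith

theorem rinner_self {d : ℕ} (a : Fin (d + 1) → ℂ) :
    rinner a a = ∑ j, Complex.normSq (a j) := by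
  simp only [rinner, Complex.mul_conj, Complex.ofReal_re]

theorem rinner_self_nonneg {d : ℕ} (a : Fin (d + 1) → ℂ) : 0 ≤ rinner a a := by
  rw [rinner_self]
  exact Finset.sum_nonneg fun j _ => Complex.normSq_nonneg _

theorem eq_zero_of_rinner_self {d : ℕ} {a : Fin (d + 1) → ℂ} (h : rinner a a = 0) : a = 0 := by
  rw [rinner_self, Finset.sum_eq_zero_iff_of_nonneg fun j _ => Complex.normSq_nonneg _] at h
  ext1 j
  exact Complex.normSq_eq_zero.1 (h j (Finset.mem_univ j))

theorem polar_Qform (d m : ℕ) (v w : Fin (m + 1) → (Fin (d + 1) → ℂ)) :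
    Qform d (m + 1) (v + w) - Qform d (m + 1) v - Qform d (m + 1) w
      = (1 / 2 : ℝ) * ∑ k, rinner (w k) (Complex.I • (v (k + 1) - v (k - 1))) := by
  have hshift : ∑ k, rinner (v k) (Complex.I • w (k + 1))
      = -∑ k, rinner (w k) (Complex.I • v (k - 1)) := by
    rw [← Finset.sum_neg_distrib, ← Equiv.sum_comp (Equiv.addRight (1 : Fin (m + 1)))
      fun k => -rinner (w k) (Complex.I • v (k - 1))]
    refine Finset.sum_congr rfl fun k _ => ?_
    rw [Equiv.coe_addRight, add_sub_cancel_right, rinner_I_smul_swap]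
  simp only [Qform, csucc_eq_add_one, Pi.add_apply, smul_add, rinner_add_left,
    rinner_add_right, rinner_I_smul_sub, Finset.sum_add_distrib, Finset.sum_sub_distrib, hshift]
  ring

/-- A function on `ℤ/(2r+1)` invariant under translation by `2` is constant, because
`(r + 1) • 2 = 1` there. -/
theorem const_of_step_two {α : Type*} (r : ℕ) (v : Fin (2 * r + 1) → α)
    (h : ∀ k, v (k + 1) = v (k - 1)) (k : Fin (2 * r + 1)) : v k = v 0 := by
  have h2 : ∀ k, v (k + (1 + 1)) = v k := fun k => by
    rw [← add_assoc, h (k + 1), add_sub_cancel_right]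
  have hj : ∀ (j : ℕ) k, v (k + j • (1 + 1)) = v k := by
    intro j
    induction j with
    | zero => simp
    | succ j ih =>
      intro k
      rw [succ_nsmul, ← add_assoc, h2, ih]
  have hcard : (2 * r + 1) • (1 : Fin (2 * r + 1)) = 0 := by
    simpa using card_nsmul_eq_zero' (x := (1 : Fin (2 * r + 1)))
  have hone : (r + 1) • ((1 : Fin (2 * r + 1)) + 1) = 1 := by
    rw [← two_nsmul, ← mul_nsmul', show (r + 1) * 2 = (2 * r + 1) + 1 by ring, succ_nsmul,
      hcard, zero_add]
  have h1 : ∀ k, v (k + 1) = v k := fun k => by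
    have := hj (r + 1) k
    rwa [hone] at this
  induction k using Fin.induction with
  | zero => rfl
  | succ i ih => rw [← ih, ← h1 i.castSucc, Fin.coeSucc_eq_succ]

theorem radical_set_eq (d n : ℕ) (hn : Odd n) :
    {v : Fin n → (Fin (d + 1) → ℂ) |
        ∀ v' : Fin n → (Fin (d + 1) → ℂ),
          Qform d n (v + v') - Qform d n v - Qform d n v' = 0}
      = {v : Fin n → (Fin (d + 1) → ℂ) | ∃ z : Fin (d + 1) → ℂ, v = fun _ => z} := by
  obtain ⟨r, rfl⟩ := hn
  ext v
  simp only [Set.mem_ofPred_eq, polar_Qform]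
  constructor
  · intro h
    refine ⟨v 0, funext (const_of_step_two r v fun k => ?_)⟩
    have hs := h fun k => Complex.I • (v (k + 1) - v (k - 1))
    rw [mul_eq_zero, or_iff_right (by norm_num),
      Finset.sum_eq_zero_iff_of_nonneg fun k _ => rinner_self_nonneg _] at hs
    have hk := eq_zero_of_rinner_self (hs k (Finset.mem_univ k))
    exact sub_eq_zero.1 ((smul_eq_zero.1 hk).resolve_left Complex.I_ne_zero)
  · rintro ⟨z, rfl⟩ w
    simp [rinner]

/-- The radical of `Q_n` (the kernel of its polar bilinear form) is exactly
the diagonal subspace, which has real dimension `2(d+1)`; in particular the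
nullity of `Q_n` is `2(d+1)`. -/
theorem radical_Qform_eq_diagonal (d n : ℕ) (hn : Odd n) :
    ({v : Fin n → (Fin (d + 1) → ℂ) |
        ∀ v' : Fin n → (Fin (d + 1) → ℂ),
          Qform d n (v + v') - Qform d n v - Qform d n v' = 0}
      = {v : Fin n → (Fin (d + 1) → ℂ) | ∃ z : Fin (d + 1) → ℂ, v = fun _ => z})
    ∧ Module.finrank ℝ
        (Submodule.span ℝ
          {v : Fin n → (Fin (d + 1) → ℂ) |
            ∀ v' : Fin n → (Fin (d + 1) → ℂ),
              Qform d n (v + v') - Qform d n v - Qform d n v' = 0})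
      = 2 * (d + 1) := by
  rw [radical_set_eq d n hn]
  refine ⟨rfl, ?_⟩
  have : NeZero n := ⟨Nat.ne_of_gt hn.pos⟩
  -- The diagonal is the range of the injective real-linear map `z ↦ (z, …, z)`.
  let f : (Fin (d + 1) → ℂ) →ₗ[ℝ] (Fin n → (Fin (d + 1) → ℂ)) := LinearMap.pi fun _ => LinearMap.id
  have hf : Function.Injective f := fun a b hab => congrFun hab 0
  have hset : {v : Fin n → (Fin (d + 1) → ℂ) | ∃ z : Fin (d + 1) → ℂ, v = fun _ => z}
      = (LinearMap.range f : Set (Fin n → (Fin (d + 1) → ℂ))) := by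
    ext v
    exact ⟨fun ⟨z, hz⟩ => ⟨z, hz.symm⟩, fun ⟨z, hz⟩ => ⟨z, hz.symm⟩⟩
  rw [hset, Submodule.span_eq, LinearMap.finrank_range_of_inj hf, Module.finrank_pi_fintype]
  simp [Complex.finrank_real_complex, mul_comm]
end

section
/- Fix integers d ≥ 0 and n ≥ 1 with n odd. Then (n−1)(d+1) is the greatest natural number k for which there exists a real-linear subspace W of (ℂ^{d+1})^n with dim_ℝ W = k such that Q_n(v) < 0 for every nonzero v ∈ W; and (n−1)(d+1) is also the greatest such k with Q_n(v) > 0 for every nonzero v ∈ W. In other words, the index and the coindex of the quadratic form Q_n are both equal to (n−1)(d+1). -/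
/-!
The form is `Q(v) = ½ ∑ Im (v_k * conj v_{k+1})`, summed over `k` and over the coordinates of
`ℂ^{d+1}` (`Qform_eq`). Entrywise complex conjugation `vconj` changes its sign
(`Qform_vconj`), and it is invariant under adding a constant vector (`Qform_add_const`).

Upper bound: if `Q` is negative definite on `W`, then `(w, u, c) ↦ w + conj u + c` from
`W × W × ℂ^{d+1}` to the whole space is injective, because a relation gives `Q(w) = -Q(u)`, whose
sides are nonpositive and nonnegative. Hence `2 dim W + 2(d+1) ≤ 2n(d+1)` (`finrank_le_of_neg`).

Lower bound: write `n = 2m+1` and let `x_j = exp(2πi(j+1)/n)` for `j < m`. The discrete Fourier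
modes `v_k = ∑_j x_j^k a_j` span a space on which, by orthogonality of characters,
`Q(v) = -(n/2) ∑_j sin(2π(j+1)/n) |a_j|²`; all these sines are positive, so `Q` is negative definite
on a space of real dimension `2m(d+1)` (`exists_neg`). Conjugation transfers both
bounds to the positive case.
-/

open scoped BigOperators

lemma csucc_bijective (n : ℕ) : Function.Bijective (csucc : Fin n → Fin n) := by
  rw [← Finite.injective_iff_bijective]
  intro a b h
  have h1 : ((a : ℕ) + 1) ≡ (b + 1) [MOD n] := congrArg Fin.val h
  have h2 : (a : ℕ) ≡ b [MOD n] := Nat.ModEq.add_right_cancel' 1 h1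
  exact Fin.ext (Nat.ModEq.eq_of_lt_of_lt h2 a.2 b.2)

lemma Qform_eq (d n : ℕ) (v : Fin n → (Fin (d + 1) → ℂ)) :
    Qform d n v =
      (1 / 2 : ℝ) * ∑ k : Fin n, ∑ i, (v k i * (starRingEnd ℂ) (v (csucc k) i)).im := by
  unfold Qform rinner
  congr 1
  refine Finset.sum_congr rfl fun k _ => Finset.sum_congr rfl fun i _ => ?_
  simp [Complex.mul_re, Complex.mul_im]
  ring

/-- Entrywise complex conjugation on `(ℂ^{d+1})^n`, as a real-linear automorphism. -/
noncomputable def vconj (d n : ℕ) :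
    (Fin n → (Fin (d + 1) → ℂ)) ≃ₗ[ℝ] (Fin n → (Fin (d + 1) → ℂ)) :=
  LinearEquiv.piCongrRight fun _ => LinearEquiv.piCongrRight fun _ => Complex.conjAe.toLinearEquiv

lemma vconj_apply (d n : ℕ) (v : Fin n → (Fin (d + 1) → ℂ)) (k : Fin n) (i : Fin (d + 1)) :
    vconj d n v k i = (starRingEnd ℂ) (v k i) := rfl

lemma Qform_vconj (d n : ℕ) (v : Fin n → (Fin (d + 1) → ℂ)) :
    Qform d n (vconj d n v) = - Qform d n v := by
  rw [Qform_eq, Qform_eq, ← mul_neg, ← Finset.sum_neg_distrib]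
  congr 1
  refine Finset.sum_congr rfl fun k _ => ?_
  rw [← Finset.sum_neg_distrib]
  refine Finset.sum_congr rfl fun i _ => ?_
  simp [vconj_apply, Complex.mul_im]
  ring

lemma Qform_neg (d n : ℕ) (v : Fin n → (Fin (d + 1) → ℂ)) : Qform d n (-v) = Qform d n v := by
  simp [Qform_eq]

/-- Constant vectors lie in the radical of `Q`. -/
lemma Qform_add_const (d n : ℕ) (v : Fin n → (Fin (d + 1) → ℂ)) (c : Fin (d + 1) → ℂ) :
    Qform d n (fun k => v k + c) = Qform d n v := by
  rw [Qform_eq, Qform_eq]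
  congr 1
  have key : ∀ k : Fin n,
      ∑ i, ((v k + c) i * (starRingEnd ℂ) ((v (csucc k) + c) i)).im
        = ∑ i, (v k i * (starRingEnd ℂ) (v (csucc k) i)).im
          + (∑ i, (v k i * (starRingEnd ℂ) (c i)).im
          - ∑ i, (v (csucc k) i * (starRingEnd ℂ) (c i)).im) := by
    intro k
    rw [← Finset.sum_sub_distrib, ← Finset.sum_add_distrib]
    refine Finset.sum_congr rfl fun i _ => ?_
    simp [Complex.mul_im]
    ring
  rw [Finset.sum_congr rfl fun k _ => key k, Finset.sum_add_distrib, Finset.sum_sub_distrib,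
    (csucc_bijective n).sum_comp (fun k => ∑ i, (v k i * (starRingEnd ℂ) (c i)).im), sub_self,
    add_zero]

lemma finrank_le_of_neg (d n : ℕ) (hn : 0 < n) (W : Submodule ℝ (Fin n → (Fin (d + 1) → ℂ)))
    (hW : ∀ v : Fin n → (Fin (d + 1) → ℂ), v ∈ W → v ≠ 0 → Qform d n v < 0) :
    Module.finrank ℝ W ≤ (n - 1) * (d + 1) := by
  let T : (W × W × (Fin (d + 1) → ℂ)) →ₗ[ℝ] (Fin n → (Fin (d + 1) → ℂ)) :=
    W.subtype.coprod (((vconj d n).toLinearMap ∘ₗ W.subtype).coprod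
      (LinearMap.pi fun _ => LinearMap.id))
  have hT : ∀ w u c, T (w, u, c) = w.1 + (vconj d n u.1 + fun _ => c) := fun w u c => rfl
  have hinj : Function.Injective T := by
    rw [injective_iff_map_eq_zero]
    rintro ⟨w, u, c⟩ h
    rw [hT] at h
    have hQ : Qform d n w.1 = - Qform d n u.1 := by
      rw [eq_neg_of_add_eq_zero_left h, Qform_neg, ← Qform_vconj]
      exact Qform_add_const d n _ c
    have hle : ∀ v : W, Qform d n v.1 ≤ 0 := by
      intro v
      by_cases hv : v.1 = 0
      · simp [hv, Qform_eq]
      · exact (hW _ v.2 hv).le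
    have hz : ∀ v : W, Qform d n v.1 = 0 → v = 0 := by
      intro v h0
      by_contra hv
      have := hW _ v.2 (fun h => hv (Subtype.ext h))
      linarith
    have hw : w = 0 := hz w (by linarith [hle w, hle u])
    have hu : u = 0 := hz u (by linarith [hle w, hle u])
    subst hw hu
    have hc : c = 0 := by
      have := congrFun h ⟨0, hn⟩
      simpa using this
    simp [hc]
  have := LinearMap.finrank_le_finrank_of_injective hinj
  simp only [Module.finrank_prod, Module.finrank_pi_fintype, Complex.finrank_real_complex,
    Finset.sum_const, Finset.card_univ, Fintype.card_fin, smul_eq_mul] at this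
  obtain ⟨p, rfl⟩ : ∃ p, n = p + 1 := ⟨n - 1, by omega⟩
  simp only [Nat.add_sub_cancel]
  nlinarith

/-- Synthesis from Fourier modes: coefficients `a_j` go to `v_k = ∑_j x_j^k a_j`. -/
noncomputable def synth (d n m : ℕ) (x : Fin m → ℂ) :
    (Fin m → (Fin (d + 1) → ℂ)) →ₗ[ℝ] (Fin n → (Fin (d + 1) → ℂ)) where
  toFun a k i := ∑ j, a j i * x j ^ (k : ℕ)
  map_add' a b := by
    ext k i
    simp [add_mul, Finset.sum_add_distrib]
  map_smul' r a := by
    ext k i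
    simp [Finset.mul_sum, mul_assoc]

/-- Orthogonality of the characters `k ↦ x_j^k`, with the cyclic shift by one. -/
lemma char_orth (n m : ℕ) (x : Fin m → ℂ) (hx : Function.Injective x)
    (hxn : ∀ j, x j ^ n = 1) (hnorm : ∀ j, x j * (starRingEnd ℂ) (x j) = 1) (j l : Fin m) :
    ∑ k : Fin n, x j ^ (k : ℕ) * (starRingEnd ℂ) (x l ^ ((csucc k : Fin n) : ℕ))
      = if j = l then (n : ℂ) * (starRingEnd ℂ) (x j) else 0 := by
  have hterm : ∀ k : Fin n, x j ^ (k : ℕ) * (starRingEnd ℂ) (x l ^ ((csucc k : Fin n) : ℕ))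
      = (x j * (starRingEnd ℂ) (x l)) ^ (k : ℕ) * (starRingEnd ℂ) (x l) := by
    intro k
    have : x l ^ ((csucc k : Fin n) : ℕ) = x l ^ ((k : ℕ) + 1) :=
      (pow_eq_pow_mod _ (hxn l)).symm
    rw [this, map_pow, pow_succ, mul_pow]
    ring
  rw [Finset.sum_congr rfl fun k _ => hterm k, ← Finset.sum_mul,
    Fin.sum_univ_eq_sum_range (fun k => (x j * (starRingEnd ℂ) (x l)) ^ k)]
  split_ifs with h
  · subst h
    simp [hnorm]
  · have hne : x j * (starRingEnd ℂ) (x l) ≠ 1 := by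
      intro h1
      apply h
      apply hx
      calc x j = x j * (starRingEnd ℂ) (x l) * x l := by
            rw [mul_assoc, mul_comm _ (x l), hnorm, mul_one]
        _ = x l := by rw [h1, one_mul]
    have hpow : (x j * (starRingEnd ℂ) (x l)) ^ n = 1 := by
      rw [mul_pow, ← map_pow, hxn, hxn, map_one, one_mul]
    rw [geom_sum_eq hne, hpow]
    simp

lemma Qform_synth (d n m : ℕ) (x : Fin m → ℂ) (hx : Function.Injective x)
    (hxn : ∀ j, x j ^ n = 1) (hnorm : ∀ j, x j * (starRingEnd ℂ) (x j) = 1)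
    (a : Fin m → (Fin (d + 1) → ℂ)) :
    Qform d n (synth d n m x a) =
      -((n : ℝ) / 2 * ∑ i, ∑ j, Complex.normSq (a j i) * (x j).im) := by
  have key : ∀ i, ∑ k : Fin n, synth d n m x a k i * (starRingEnd ℂ) (synth d n m x a (csucc k) i)
      = ∑ j, (a j i * (starRingEnd ℂ) (a j i)) * ((n : ℂ) * (starRingEnd ℂ) (x j)) := by
    intro i
    calc ∑ k : Fin n, synth d n m x a k i * (starRingEnd ℂ) (synth d n m x a (csucc k) i)
        = ∑ k : Fin n, ∑ j, ∑ l, (a j i * (starRingEnd ℂ) (a l i)) *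
            (x j ^ (k : ℕ) * (starRingEnd ℂ) (x l ^ ((csucc k : Fin n) : ℕ))) := by
          refine Finset.sum_congr rfl fun k _ => ?_
          simp only [synth, LinearMap.coe_mk, AddHom.coe_mk, map_sum, Finset.sum_mul_sum, map_mul]
          refine Finset.sum_congr rfl fun j _ => Finset.sum_congr rfl fun l _ => ?_
          ring
      _ = ∑ j, ∑ l, (a j i * (starRingEnd ℂ) (a l i)) *
            ∑ k : Fin n, (x j ^ (k : ℕ) * (starRingEnd ℂ) (x l ^ ((csucc k : Fin n) : ℕ))) := by
          rw [Finset.sum_comm]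
          refine Finset.sum_congr rfl fun j _ => ?_
          rw [Finset.sum_comm]
          refine Finset.sum_congr rfl fun l _ => ?_
          rw [Finset.mul_sum]
      _ = _ := by
          simp_rw [char_orth n m x hx hxn hnorm]
          simp
  rw [Qform_eq, Finset.sum_comm]
  simp_rw [← Complex.im_sum, key, Complex.im_sum, Complex.mul_conj]
  rw [Finset.mul_sum, Finset.mul_sum, ← Finset.sum_neg_distrib]
  refine Finset.sum_congr rfl fun i _ => ?_
  rw [Finset.mul_sum, Finset.mul_sum, ← Finset.sum_neg_distrib]
  refine Finset.sum_congr rfl fun j _ => ?_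
  rw [Complex.im_ofReal_mul, ← Complex.ofReal_natCast, Complex.im_ofReal_mul, Complex.conj_im]
  ring

/-- The `n`-th roots of unity in the open upper half plane, for `n = 2m+1`. -/
lemma exists_roots (m : ℕ) : ∃ x : Fin m → ℂ, Function.Injective x ∧
    (∀ j, x j ^ (2 * m + 1) = 1) ∧ (∀ j, x j * (starRingEnd ℂ) (x j) = 1) ∧
    ∀ j, 0 < (x j).im := by
  have hprim := Complex.isPrimitiveRoot_exp (2 * m + 1) (by omega)
  set ζ := Complex.exp (2 * Real.pi * Complex.I / ((2 * m + 1 : ℕ) : ℂ)) with hζ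
  have hexp : ∀ j : ℕ, ζ ^ (j + 1) =
      Complex.exp (((2 * Real.pi * (j + 1) / (2 * m + 1) : ℝ) : ℂ) * Complex.I) := by
    intro j
    rw [hζ, ← Complex.exp_nat_mul]
    congr 1
    push_cast
    ring
  refine ⟨fun j => ζ ^ ((j : ℕ) + 1), ?_, ?_, ?_, ?_⟩
  · intro a b h
    have := hprim.pow_inj (by omega) (by omega) h
    exact Fin.ext (by omega)
  · intro j
    rw [← pow_mul, mul_comm, pow_mul, hprim.pow_eq_one, one_pow]
  · intro j
    simp only [hexp]
    rw [Complex.mul_conj, Complex.normSq_eq_norm_sq, Complex.norm_exp_ofReal_mul_I]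
    simp
  · intro j
    simp only [hexp]
    rw [Complex.exp_ofReal_mul_I_im]
    have hj : ((j : ℕ) : ℝ) + 1 ≤ m := by exact_mod_cast j.2
    apply Real.sin_pos_of_pos_of_lt_pi
    · have := Real.pi_pos
      positivity
    · rw [div_lt_iff₀ (by positivity)]
      nlinarith [Real.pi_pos]

lemma exists_neg (d m : ℕ) :
    ∃ W : Submodule ℝ (Fin (2 * m + 1) → (Fin (d + 1) → ℂ)),
      Module.finrank ℝ W = (2 * m + 1 - 1) * (d + 1) ∧
      ∀ v : Fin (2 * m + 1) → (Fin (d + 1) → ℂ), v ∈ W → v ≠ 0 → Qform d (2 * m + 1) v < 0 := by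
  obtain ⟨x, hx, hxn, hnorm, him⟩ := exists_roots m
  have hneg : ∀ a, a ≠ 0 → Qform d (2 * m + 1) (synth d (2 * m + 1) m x a) < 0 := by
    intro a ha
    rw [Qform_synth d _ m x hx hxn hnorm, neg_lt_zero]
    obtain ⟨j, hj⟩ := Function.ne_iff.mp ha
    obtain ⟨i, hi⟩ := Function.ne_iff.mp hj
    have hterm : ∀ i j, 0 ≤ Complex.normSq (a j i) * (x j).im := fun i j =>
      mul_nonneg (Complex.normSq_nonneg _) (him j).le
    have hpos : 0 < ∑ i, ∑ j, Complex.normSq (a j i) * (x j).im := by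
      refine Finset.sum_pos' (fun i _ => Finset.sum_nonneg fun j _ => hterm i j)
        ⟨i, Finset.mem_univ _, Finset.sum_pos' (fun j _ => hterm i j) ⟨j, Finset.mem_univ _, ?_⟩⟩
      exact mul_pos (Complex.normSq_pos.mpr hi) (him j)
    positivity
  refine ⟨LinearMap.range (synth d (2 * m + 1) m x), ?_, ?_⟩
  -- Injectivity of `synth` is a consequence of definiteness, since `Q 0 = 0`.
  · have hinj : Function.Injective (synth d (2 * m + 1) m x) := by
      rw [injective_iff_map_eq_zero]
      intro a h
      by_contra ha
      have := hneg a ha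
      rw [h] at this
      simp [Qform_eq] at this
    rw [LinearMap.finrank_range_of_inj hinj]
    simp only [Module.finrank_pi_fintype, Complex.finrank_real_complex,
      Finset.sum_const, Finset.card_univ, Fintype.card_fin, smul_eq_mul, Nat.add_sub_cancel]
    ring
  · rintro _ ⟨a, rfl⟩ hv
    refine hneg a ?_
    rintro rfl
    exact hv (map_zero _)

/-- For odd `n`, the index and the coindex of the real quadratic form `Q_n`
are both `(n−1)(d+1)`: this number is the greatest dimension of a real subspace
on which `Q_n` is negative (resp. positive) definite. -/
theorem index_coindex_Qform (d n : ℕ) (hn : Odd n) :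
    IsGreatest {k : ℕ | ∃ W : Submodule ℝ (Fin n → (Fin (d + 1) → ℂ)),
        Module.finrank ℝ W = k ∧
        ∀ v : Fin n → (Fin (d + 1) → ℂ), v ∈ W → v ≠ 0 → Qform d n v < 0}
      ((n - 1) * (d + 1))
    ∧ IsGreatest {k : ℕ | ∃ W : Submodule ℝ (Fin n → (Fin (d + 1) → ℂ)),
        Module.finrank ℝ W = k ∧
        ∀ v : Fin n → (Fin (d + 1) → ℂ), v ∈ W → v ≠ 0 → 0 < Qform d n v}
      ((n - 1) * (d + 1)) := by
  obtain ⟨m, rfl⟩ := hn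
  have hpos : 0 < 2 * m + 1 := by omega
  refine ⟨⟨exists_neg d m, ?_⟩, ⟨?_, ?_⟩⟩
  · rintro k ⟨W, rfl, hW⟩
    exact finrank_le_of_neg d _ hpos W hW
  · obtain ⟨W, hk, hW⟩ := exists_neg d m
    refine ⟨W.map (vconj d (2 * m + 1)).toLinearMap, ?_, ?_⟩
    · rw [← hk]
      exact LinearEquiv.finrank_map_eq _ W
    · rintro _ ⟨u, hu, rfl⟩ hv
      have hu0 : u ≠ 0 := by
        rintro rfl
        exact hv (map_zero _)
      have := hW u hu hu0
      rw [LinearEquiv.coe_coe, Qform_vconj]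
      linarith
  · rintro k ⟨W, rfl, hW⟩
    rw [← LinearEquiv.finrank_map_eq (vconj d (2 * m + 1)) W]
    refine finrank_le_of_neg d _ hpos _ ?_
    rintro _ ⟨u, hu, rfl⟩ hv
    have hu0 : u ≠ 0 := by
      rintro rfl
      exact hv (map_zero _)
    have := hW u hu hu0
    rw [LinearEquiv.coe_coe, Qform_vconj]
    linarith
end

section
/- Fix integers d ≥ 0 and n ≥ 1 with n odd. For every v = (v_1,…,v_n) ∈ (ℂ^{d+1})^n, setting w_k := (v_k + v_{k+1})/2 with the cyclic convention v_{n+1} := v_1, one has Q_n(v_1,…,v_n) = R_n(w_1,…,w_n), i.e. (1/2) ∑_{k=1}^{n} ⟨v_k, i v_{k+1}⟩ = 2 ∑_{k=1}^{n} ∑_{l=1}^{k−1} (−1)^{k+l} ⟨w_k, i w_l⟩. -/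
/-!
Put `ω(x, y) = ⟨x, i y⟩`, an alternating real bilinear form, and extend `v` to an `n`-periodic
sequence `u : ℕ → ℂ^{d+1}`, so that `w_k = (u_k + u_{k+1}) / 2`. The alternating sums of the `w_l`
telescope: `∑_{l<k} (-1)^l w_l = (u_0 - (-1)^k u_k) / 2` (`inner_telescope`, paired with a vector). Hence
`∑_{l<k} (-1)^{k+l} ω(w_k, w_l)` equals `((-1)^k ω(u_k + u_{k+1}, u_0) + ω(u_k, u_{k+1})) / 4`.
Summing over `k < n`, the first term telescopes again, to
`ω(u_0 - (-1)^n u_n, u_0)` (`outer_telescope`), and this vanishes because `u_n = u_0`.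
-/

open scoped BigOperators

/-- The quadratic form `R_j(w) = 2 ∑_{k} ∑_{l<k} (−1)^{k+l} ⟨w_k, i w_l⟩`
(with 1-based exponents `(−1)^{k+l}`, which in 0-based indexing is again
`(−1)^{k+l}`). -/
noncomputable def Rform (d j : ℕ) (w : Fin j → (Fin (d + 1) → ℂ)) : ℝ :=
  2 * ∑ k : Fin j, ∑ l ∈ Finset.Iio k,
    (-1 : ℝ) ^ ((k : ℕ) + (l : ℕ)) * rinner (w k) (Complex.I • w l)

lemma omega_add_left {d : ℕ} (x y z : Fin (d + 1) → ℂ) :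
    rinner (x + y) (Complex.I • z) = rinner x (Complex.I • z) + rinner y (Complex.I • z) := by
  simp only [rinner, ← Finset.sum_add_distrib]
  refine Finset.sum_congr rfl fun j _ => ?_
  simp [add_mul]
  ring

lemma omega_antisymm {d : ℕ} (x y : Fin (d + 1) → ℂ) :
    rinner x (Complex.I • y) = -rinner y (Complex.I • x) := by
  simp only [rinner, ← Finset.sum_neg_distrib]
  refine Finset.sum_congr rfl fun j _ => ?_
  simp
  ring

lemma omega_self {d : ℕ} (x : Fin (d + 1) → ℂ) : rinner x (Complex.I • x) = 0 := by
  linarith [omega_antisymm x x]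

lemma omega_half_left {d : ℕ} (x y : Fin (d + 1) → ℂ) :
    rinner ((2⁻¹ : ℂ) • x) (Complex.I • y) = 2⁻¹ * rinner x (Complex.I • y) := by
  simp only [rinner, Finset.mul_sum]
  refine Finset.sum_congr rfl fun j _ => ?_
  have h : (2⁻¹ : ℂ) = ((2⁻¹ : ℝ) : ℂ) := by push_cast; rfl
  rw [Pi.smul_apply, smul_eq_mul, mul_assoc, h, Complex.re_ofReal_mul]

lemma omega_half_add_right {d : ℕ} (x y z : Fin (d + 1) → ℂ) :
    rinner x (Complex.I • ((2⁻¹ : ℂ) • (y + z))) =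
      2⁻¹ * (rinner x (Complex.I • y) + rinner x (Complex.I • z)) := by
  rw [omega_antisymm, omega_half_left, omega_add_left, omega_antisymm x y, omega_antisymm x z]
  ring

lemma inner_telescope {d : ℕ} (u : ℕ → Fin (d + 1) → ℂ) (x : Fin (d + 1) → ℂ) (k : ℕ) :
    ∑ l ∈ Finset.range k,
        (-1 : ℝ) ^ l * rinner x (Complex.I • ((2⁻¹ : ℂ) • (u l + u (l + 1)))) =
      2⁻¹ * (rinner x (Complex.I • u 0) - (-1) ^ k * rinner x (Complex.I • u k)) := by
  induction k with
  | zero => simp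
  | succ k ih =>
    rw [Finset.sum_range_succ, ih, omega_half_add_right]
    ring

lemma outer_telescope {d : ℕ} (u : ℕ → Fin (d + 1) → ℂ) (m : ℕ) :
    ∑ k ∈ Finset.range m, ∑ l ∈ Finset.range k, (-1 : ℝ) ^ (k + l) *
        rinner ((2⁻¹ : ℂ) • (u k + u (k + 1)))
          (Complex.I • ((2⁻¹ : ℂ) • (u l + u (l + 1)))) =
      4⁻¹ * (∑ k ∈ Finset.range m, rinner (u k) (Complex.I • u (k + 1))
        - (-1) ^ m * rinner (u m) (Complex.I • u 0)) := by
  induction m with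
  | zero => simp [omega_self]
  | succ m ih =>
    have hsq : (-1 : ℝ) ^ m * (-1) ^ m = 1 := by rw [← mul_pow]; simp
    rw [Finset.sum_range_succ, ih, Finset.sum_range_succ]
    simp only [pow_add _ m, mul_assoc]
    rw [← Finset.mul_sum, inner_telescope]
    simp only [omega_half_left, omega_add_left, omega_self]
    rw [omega_antisymm (u (m + 1)) (u m)]
    linear_combination 4⁻¹ * rinner (u m) (Complex.I • u (m + 1)) * hsq

lemma sum_Iio_fin {n : ℕ} (k : Fin n) (f : ℕ → ℝ) :
    ∑ l ∈ Finset.Iio k, f l = ∑ l ∈ Finset.range k, f l := by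
  rw [← Nat.Iio_eq_range, ← Fin.map_valEmbedding_Iio, Finset.sum_map]
  rfl

/-- In the variables `w_k := (v_k + v_{k+1})/2` (cyclic convention `v_{n+1} = v_1`),
for odd `n` one has `Q_n(v) = R_n(w)`, i.e.
`(1/2) ∑ ⟨v_k, i v_{k+1}⟩ = 2 ∑_{k} ∑_{l<k} (−1)^{k+l} ⟨w_k, i w_l⟩`. -/
theorem Qform_eq_Rform_of_w (d n : ℕ) (hn : Odd n) (v : Fin n → (Fin (d + 1) → ℂ)) :
    Qform d n v = Rform d n (fun k => (2⁻¹ : ℂ) • (v k + v (csucc k))) := by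
  have hpos : 0 < n := hn.pos
  -- the `n`-periodic extension of `v`
  let u : ℕ → Fin (d + 1) → ℂ := fun m => v ⟨m % n, Nat.mod_lt _ hpos⟩
  have hu : ∀ k : Fin n, v k = u k := fun k =>
    congrArg v (Fin.ext (Nat.mod_eq_of_lt k.isLt).symm)
  have hu' : ∀ k : Fin n, v (csucc k) = u (k + 1) := fun k => rfl
  have hun : u n = u 0 := congrArg v (Fin.ext (by simp))
  have hR := outer_telescope u n
  rw [hun, omega_self] at hR
  simp only [Qform, Rform, hu', hu]
  rw [Fin.sum_univ_eq_sum_range (fun k => rinner (u k) (Complex.I • u (k + 1))) n]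
  simp only [fun k : Fin n => sum_Iio_fin k (fun l => (-1 : ℝ) ^ ((k : ℕ) + l) *
    rinner ((2⁻¹ : ℂ) • (u k + u (k + 1))) (Complex.I • ((2⁻¹ : ℂ) • (u l + u (l + 1)))))]
  rw [Fin.sum_univ_eq_sum_range (fun k => ∑ l ∈ Finset.range k, (-1 : ℝ) ^ (k + l) *
    rinner ((2⁻¹ : ℂ) • (u k + u (k + 1)))
      (Complex.I • ((2⁻¹ : ℂ) • (u l + u (l + 1))))) n, hR]
  ring
end

section
/- Fix an integer d ≥ 0 and odd integers n, m ≥ 1. For all w = (w_1,…,w_n) ∈ (ℂ^{d+1})^n and w' = (w'_1,…,w'_m) ∈ (ℂ^{d+1})^m, one has R_{n+m+1}(B̃_{n,m}(w,w')) = R_n(w) + R_m(w'), i.e. R_{n+m+1}(w_1,…,w_n, ∑_{k=1}^{m}(−1)^{k+1} w'_k, w'_1,…,w'_m) = R_n(w_1,…,w_n) + R_m(w'_1,…,w'_m). -/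
/-!
Absorb the signs into the vectors: with `u_k = (-1)^k w_k` (0-based) and the real bilinear form
`ω(z, w) = ⟨z, i w⟩`, one has `R_j(w) = 2 ∑_k ω(u_k, ∑_{l<k} u_l)` (`Rform_eq`). As `n` is odd, the
signed sequence of `B̃(w, w')` is `u_0, …, u_{n-1}, -S, u'_0, …, u'_{m-1}`, where `S = ∑_k u'_k`. Put
`a = ∑_k u_k`. Splitting the sum at the middle entry leaves, besides the terms of `R_n(w)` and
`R_m(w')`, only `ω(-S, a) + ω(S, a - S) = -ω(S, S)`, which vanishes because `ω` is alternating.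
-/

open scoped BigOperators

/-- The map `B̃_{n,m}(w,w') = (w_1,…,w_n, ∑ (−1)^{k+1} w'_k, w'_1,…,w'_m)`
(in 0-based indexing the middle alternating sum is `∑ (−1)^k w'_k`). -/
noncomputable def Btilde (d n m : ℕ) (w : Fin n → (Fin (d + 1) → ℂ))
    (w' : Fin m → (Fin (d + 1) → ℂ)) : Fin (n + m + 1) → (Fin (d + 1) → ℂ) :=
  fun j =>
    if h : (j : ℕ) < n then w ⟨j, h⟩
    else if h' : (j : ℕ) = n then ∑ k : Fin m, ((-1 : ℂ) ^ (k : ℕ)) • w' k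
    else w' ⟨(j : ℕ) - (n + 1), by have := j.isLt; omega⟩

/-- The real bilinear form `ω(z, w) = ⟨z, i w⟩`. -/
noncomputable def omegaForm (d : ℕ) :
    (Fin (d + 1) → ℂ) →ₗ[ℝ] (Fin (d + 1) → ℂ) →ₗ[ℝ] ℝ :=
  LinearMap.mk₂ ℝ (fun z w => rinner z (Complex.I • w))
    (by intro x y z
        simp only [rinner, ← Finset.sum_add_distrib]
        refine Finset.sum_congr rfl fun j _ => ?_
        simp; ring)
    (by intro c x y
        simp only [rinner, smul_eq_mul, Finset.mul_sum]
        refine Finset.sum_congr rfl fun j _ => ?_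
        simp; ring)
    (by intro x y z
        simp only [rinner, ← Finset.sum_add_distrib]
        refine Finset.sum_congr rfl fun j _ => ?_
        simp; ring)
    (by intro c x y
        simp only [rinner, smul_eq_mul, Finset.mul_sum]
        refine Finset.sum_congr rfl fun j _ => ?_
        simp; ring)

lemma omegaForm_apply (d : ℕ) (z w : Fin (d + 1) → ℂ) :
    omegaForm d z w = rinner z (Complex.I • w) := rfl

lemma omegaForm_self (d : ℕ) (z : Fin (d + 1) → ℂ) : omegaForm d z z = 0 := by
  rw [omegaForm_apply, rinner]
  refine Finset.sum_eq_zero fun j _ => ?_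
  simp; ring

/-- The signed sequence `k ↦ (-1)^k w_k`, extended by zero to all of `ℕ`. -/
noncomputable def signedExt {d j : ℕ} (w : Fin j → (Fin (d + 1) → ℂ)) (k : ℕ) :
    Fin (d + 1) → ℂ :=
  if h : k < j then ((-1 : ℝ) ^ k) • w ⟨k, h⟩ else 0

lemma signedExt_fin {d j : ℕ} (w : Fin j → (Fin (d + 1) → ℂ)) (k : Fin j) :
    signedExt w k = ((-1 : ℝ) ^ (k : ℕ)) • w k := by
  simp [signedExt]

lemma Rform_eq (d j : ℕ) (w : Fin j → (Fin (d + 1) → ℂ)) :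
    Rform d j w = 2 * ∑ k ∈ Finset.range j,
      omegaForm d (signedExt w k) (∑ l ∈ Finset.range k, signedExt w l) := by
  rw [Rform, Finset.sum_range]
  congr 1
  refine Finset.sum_congr rfl fun k _ => ?_
  rw [← Nat.Iio_eq_range, ← Fin.map_valEmbedding_Iio, Finset.sum_map, map_sum]
  refine Finset.sum_congr rfl fun l _ => ?_
  rw [Fin.valEmbedding_apply, signedExt_fin, signedExt_fin, map_smul, map_smul,
    LinearMap.smul_apply, omegaForm_apply, smul_eq_mul, smul_eq_mul, pow_add]
  ring

lemma signedExt_Btilde_lt {d n m : ℕ} (w : Fin n → (Fin (d + 1) → ℂ))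
    (w' : Fin m → (Fin (d + 1) → ℂ)) {k : ℕ} (hk : k < n) :
    signedExt (Btilde d n m w w') k = signedExt w k := by
  have h : k < n + m + 1 := by omega
  simp [signedExt, Btilde, hk, h]

lemma signedExt_Btilde_mid {d n m : ℕ} (hn : Odd n) (w : Fin n → (Fin (d + 1) → ℂ))
    (w' : Fin m → (Fin (d + 1) → ℂ)) :
    signedExt (Btilde d n m w w') n = -∑ k ∈ Finset.range m, signedExt w' k := by
  have h : n < n + m + 1 := by omega
  rw [Finset.sum_range]
  simp only [signedExt_fin]
  simp only [signedExt, Btilde, h, hn.neg_one_pow, dite_true, lt_irrefl, dite_false, neg_smul,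
    one_smul]
  congr 1
  refine Finset.sum_congr rfl fun k _ => ?_
  ext i
  simp

lemma signedExt_Btilde_gt {d n m : ℕ} (hn : Odd n) (w : Fin n → (Fin (d + 1) → ℂ))
    (w' : Fin m → (Fin (d + 1) → ℂ)) (k : ℕ) :
    signedExt (Btilde d n m w w') (n + 1 + k) = signedExt w' k := by
  have h1 : ¬ n + 1 + k < n := by omega
  have h2 : ¬ n + 1 + k = n := by omega
  have h3 : n + 1 + k < n + m + 1 ↔ k < m := by omega
  simp only [signedExt, Btilde, h1, h2, h3, dite_false, pow_add, hn.neg_one_pow,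
    Nat.add_sub_cancel_left]
  simp

/-- For odd `n` and `m`, `R_{n+m+1}(B̃_{n,m}(w,w')) = R_n(w) + R_m(w')`. -/
theorem Rform_Btilde (d n m : ℕ) (hn : Odd n) (hm : Odd m)
    (w : Fin n → (Fin (d + 1) → ℂ)) (w' : Fin m → (Fin (d + 1) → ℂ)) :
    Rform d (n + m + 1) (Btilde d n m w w') = Rform d n w + Rform d m w' := by
  have hlow : ∀ k ≤ n, ∑ l ∈ Finset.range k, signedExt (Btilde d n m w w') l
      = ∑ l ∈ Finset.range k, signedExt w l := fun k hk =>
    Finset.sum_congr rfl fun l hl =>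
      signedExt_Btilde_lt w w' (by have := Finset.mem_range.1 hl; omega)
  have hfirst : ∑ k ∈ Finset.range n, omegaForm d (signedExt (Btilde d n m w w') k)
        (∑ l ∈ Finset.range k, signedExt (Btilde d n m w w') l)
      = ∑ k ∈ Finset.range n, omegaForm d (signedExt w k)
        (∑ l ∈ Finset.range k, signedExt w l) :=
    Finset.sum_congr rfl fun k hk => by
      have hk := Finset.mem_range.1 hk
      rw [hlow k hk.le, signedExt_Btilde_lt w w' hk]
  have hrange : Finset.range (n + m + 1) = Finset.range (n + 1 + m) := by
    rw [Nat.add_right_comm]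
  rw [Rform_eq, Rform_eq, Rform_eq, hrange, Finset.sum_range_add,
    Finset.sum_range_succ, hfirst, hlow n le_rfl, signedExt_Btilde_mid hn]
  simp only [Finset.sum_range_add _ (n + 1), Finset.sum_range_succ _ n, hlow n le_rfl,
    signedExt_Btilde_gt hn, signedExt_Btilde_mid hn]
  simp only [map_add, Finset.sum_add_distrib]
  -- The sums over the last block of `ω(u'_k, c)` with `c` independent of `k` collapse to `ω(S, c)`.
  have hcollapse : ∀ c, ∑ k ∈ Finset.range m, omegaForm d (signedExt w' k) c
      = omegaForm d (∑ k ∈ Finset.range m, signedExt w' k) c := fun c => by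
    rw [map_sum, LinearMap.sum_apply]
  rw [hcollapse, hcollapse, map_neg, map_neg, LinearMap.neg_apply, omegaForm_self]
  ring
end

section
/- Let 𝔽 be a field, let ((V^t)_{t∈ℝ}, π) and ((W^t)_{t∈ℝ}, κ) be persistence modules over 𝔽, and assume that every transition map κ_s^t : W^s → W^t (s ≤ t) is injective (this is the condition that W has no finite bar). Let δ, δ' ∈ ℝ with δ + δ' ≥ 0, and suppose given 𝔽-linear maps f_t : V^t → W^{t+δ} and g_t : W^t → V^{t+δ'} for all t ∈ ℝ which commute with the transition maps (i.e. f_s ∘ π_t^s = κ_{t+δ}^{s+δ} ∘ f_t and g_s ∘ κ_t^s = π_{t+δ'}^{s+δ'} ∘ g_t for all t ≤ s) and which satisfy g_{t+δ} ∘ f_t = π_t^{t+δ+δ'} for all t ∈ ℝ. Then for every t ∈ ℝ and every v ∈ V^t with π_t^{t+δ+δ'}(v) ≠ 0, one has π_t^s(v) ≠ 0 for all s ≥ t. (Equivalently, every finite bar of V has length at most δ + δ': βmax(V) ≤ δ + δ'.) -/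
/-- If `(V,π)` and `(W,κ)` are persistence modules over a field `𝔽`, all transition
maps of `W` are injective (i.e. `W` has no finite bar), and there are morphisms of
persistence modules `f : V → W[δ]` and `g : W → V[δ']` with `δ + δ' ≥ 0` such that
`g_{t+δ} ∘ f_t = π_t^{t+δ+δ'}`, then for every `v ∈ V^t` whose image under
`π_t^{t+δ+δ'}` is nonzero, all images `π_t^s v`, `s ≥ t`, are nonzero.
(Equivalently, every finite bar of `V` has length at most `δ + δ'`.) -/
theorem betamax_le_of_interleaving_with_no_finite_bars
    (𝔽 : Type*) [Field 𝔽]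
    (V W : ℝ → Type*)
    [∀ t, AddCommGroup (V t)] [∀ t, Module 𝔽 (V t)]
    [∀ t, AddCommGroup (W t)] [∀ t, Module 𝔽 (W t)]
    (π : ∀ s t : ℝ, s ≤ t → (V s →ₗ[𝔽] V t))
    (κ : ∀ s t : ℝ, s ≤ t → (W s →ₗ[𝔽] W t))
    (hπid : ∀ (t : ℝ) (h : t ≤ t), π t t h = LinearMap.id)
    (hπcomp : ∀ (r s t : ℝ) (h1 : r ≤ s) (h2 : s ≤ t),
      (π s t h2) ∘ₗ (π r s h1) = π r t (h1.trans h2))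
    (hκid : ∀ (t : ℝ) (h : t ≤ t), κ t t h = LinearMap.id)
    (hκcomp : ∀ (r s t : ℝ) (h1 : r ≤ s) (h2 : s ≤ t),
      (κ s t h2) ∘ₗ (κ r s h1) = κ r t (h1.trans h2))
    (hκinj : ∀ (s t : ℝ) (h : s ≤ t), Function.Injective (κ s t h))
    (δ δ' : ℝ) (hδ : 0 ≤ δ + δ')
    (f : ∀ t : ℝ, V t →ₗ[𝔽] W (t + δ))
    (g : ∀ t : ℝ, W t →ₗ[𝔽] V (t + δ'))
    (hf : ∀ (t s : ℝ) (h : t ≤ s),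
      (f s) ∘ₗ (π t s h) = (κ (t + δ) (s + δ) (by linarith)) ∘ₗ (f t))
    (hg : ∀ (t s : ℝ) (h : t ≤ s),
      (g s) ∘ₗ (κ t s h) = (π (t + δ') (s + δ') (by linarith)) ∘ₗ (g t))
    (hgf : ∀ t : ℝ, (g (t + δ)) ∘ₗ (f t) = π t (t + δ + δ') (by linarith)) :
    ∀ (t : ℝ) (v : V t), π t (t + δ + δ') (by linarith) v ≠ 0 →
      ∀ (s : ℝ) (hs : t ≤ s), π t s hs v ≠ 0 := by
  intro t v hv s hs h0
  -- By naturality of `f`, `κ (f v) = f (π v) = 0`; injectivity of `κ` gives `f v = 0`,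
  -- and the nonzero vector in `hv` equals `g (f v) = 0`.
  have hκfv : κ (t + δ) (s + δ) (by linarith) (f t v) = 0 := by
    have h := LinearMap.congr_fun (hf t s hs) v
    simp only [LinearMap.comp_apply, h0, map_zero] at h
    exact h.symm
  have hfv : f t v = 0 := hκinj _ _ _ (hκfv.trans (map_zero _).symm)
  apply hv
  rw [← hgf t, LinearMap.comp_apply, hfv, map_zero]
end

section
/- Let u < v be real numbers with v − u ≤ 1, let a ∈ ℝ, and let n ≥ 1 be an integer. Let χ_I : ℝ → ℝ denote the indicator function of the open interval I = (u,v). Then ∑_{k∈ℤ} ∫_0^1 |χ_I(a+t+k+n) − χ_I(a+t+k)| dt = 2(v−u), where only finitely many summands are nonzero. -/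
open MeasureTheory

/-!
Since `I = (u,v)` has length at most `1 ≤ n`, the points `x` and `x + n` never both lie in `I`, so
`|χ_I(x+n) − χ_I(x)| = χ_I(x+n) + χ_I(x)`. The unit intervals `a + k + (0,1]` tile the line, so the
sum over `k` is the integral of this function over `ℝ`, namely `2(v−u)`. A nonzero summand forces
`a + t + k` or `a + t + k + n` into `I` for some `t ∈ [0,1]`, which bounds `k`.
-/

/-- The translates of `(u,v)` by `0` and `-n` are disjoint, so the absolute difference of their
indicators is the sum. -/
lemma abs_indicator_sub_eq_add (u v : ℝ) (n : ℕ) (hlen : v - u ≤ 1) (hn : 1 ≤ n) (x : ℝ) :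
    |Set.indicator (Set.Ioo u v) (fun _ => (1 : ℝ)) (x + n)
        - Set.indicator (Set.Ioo u v) (fun _ => (1 : ℝ)) x|
      = Set.indicator (Set.Ioo u v) (fun _ => (1 : ℝ)) (x + n)
        + Set.indicator (Set.Ioo u v) (fun _ => (1 : ℝ)) x := by
  have hn' : (1 : ℝ) ≤ n := by exact_mod_cast hn
  by_cases h1 : x + n ∈ Set.Ioo u v <;> by_cases h2 : x ∈ Set.Ioo u v
  · exfalso
    linarith [h1.2, h2.1]
  all_goals simp [Set.indicator_of_mem, Set.indicator_of_notMem, h1, h2]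

/-- For a finite interval `I = (u,v)` of length at most 1, the contribution of
`I` to the integral formula for the total bar-length:
`∑_{k∈ℤ} ∫_0^1 |χ_I(a+t+k+n) − χ_I(a+t+k)| dt = 2(v−u)`, the sum having only
finitely many nonzero summands. -/
theorem finite_bar_contribution (u v a : ℝ) (n : ℕ) (huv : u < v) (hlen : v - u ≤ 1)
    (hn : 1 ≤ n) :
    (Function.support (fun k : ℤ =>
        ∫ t in (0:ℝ)..1,
          |Set.indicator (Set.Ioo u v) (fun _ => (1 : ℝ)) (a + t + k + n)
            - Set.indicator (Set.Ioo u v) (fun _ => (1 : ℝ)) (a + t + k)|)).Finite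
    ∧ (∑' k : ℤ,
        ∫ t in (0:ℝ)..1,
          |Set.indicator (Set.Ioo u v) (fun _ => (1 : ℝ)) (a + t + k + n)
            - Set.indicator (Set.Ioo u v) (fun _ => (1 : ℝ)) (a + t + k)|)
      = 2 * (v - u) := by
  simp only [abs_indicator_sub_eq_add u v n hlen hn]
  set χ : ℝ → ℝ := Set.indicator (Set.Ioo u v) (fun _ => (1 : ℝ)) with hχ
  constructor
  · refine (Set.finite_Icc ⌊u - a - 1 - n⌋ ⌈v - a⌉).subset fun k hk => ?_
    by_contra hk'
    refine hk ?_
    have hzero : ∀ t ∈ Set.uIcc (0:ℝ) 1, χ (a + t + k + n) + χ (a + t + k) = 0 := by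
      intro t ht
      rw [Set.uIcc_of_le zero_le_one] at ht
      have hn0 : (0:ℝ) ≤ n := n.cast_nonneg
      have key : ¬ (u - a - 1 - n < k ∧ (k : ℝ) < v - a) := by
        rintro ⟨h1, h2⟩
        refine hk' ⟨?_, ?_⟩
        · exact_mod_cast (Int.floor_le _).trans h1.le
        · exact_mod_cast h2.le.trans (Int.le_ceil _)
      rw [hχ, Set.indicator_of_notMem, Set.indicator_of_notMem, add_zero]
      · rintro ⟨h1, h2⟩
        exact key ⟨by linarith [ht.2], by linarith [ht.1]⟩
      · rintro ⟨h1, h2⟩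
        exact key ⟨by linarith [ht.2], by linarith [ht.1]⟩
    change (∫ t in (0:ℝ)..1, (χ (a + t + k + n) + χ (a + t + k))) = 0
    rw [intervalIntegral.integral_congr (g := fun _ => (0:ℝ)) hzero]
    simp
  · have hint : Integrable χ :=
      (integrable_indicator_iff measurableSet_Ioo).2 (integrableOn_const (by simp))
    have hval : ∫ x, χ x = v - u := by
      rw [hχ, integral_indicator measurableSet_Ioo]
      simp [huv.le]
    have h1 : Integrable fun x => χ (x + (a + n)) := hint.comp_add_right _
    have h2 : Integrable fun x => χ (x + a) := hint.comp_add_right _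
    have hs := (h1.add h2).hasSum_intervalIntegral_comp_add_int.tsum_eq
    simp only [Pi.add_apply] at hs
    rw [integral_add h1 h2, integral_add_right_eq_self χ, integral_add_right_eq_self χ, hval] at hs
    rw [two_mul, ← hs]
    refine tsum_congr fun k => intervalIntegral.integral_congr fun t _ => ?_
    congr 2 <;> ring
end

section
/- Fix integers d ≥ 0 and n ≥ 1 with n odd, an integer p ≥ 3, and an integer q with |q| ≤ (p−1)/2; set ζ := e^{2πi/p}. For v_1,…,v_n ∈ ℂ^{d+1}, define u_k := v_k + (−1)^k ((1−ζ^q)/2) · v_1 for 1 ≤ k ≤ n, with the cyclic convention u_{n+1} := u_1. Then ∑_{k=1}^{n−1} ⟨v_k, i v_{k+1}⟩ + ⟨v_n, i ζ^q v_1⟩ = ∑_{k=1}^{n} ⟨u_k, i u_{k+1}⟩ − 2 tan(qπ/p) ‖u_1‖². -/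
/-!
Write `ω(x, y) = ⟨x, i y⟩`, a real bilinear alternating form, and `c = (1 - ζ^q)/2`, `w = v_1`.
Since consecutive `u_k` are shifted by opposite multiples `±c w`, the difference
`ω(u_k, u_{k+1}) - ω(v_k, v_{k+1})` is a telescoping difference of `(-1)^k ω(v_k, c w)`
(`rinner_step`). As `n` is odd, the telescoped sum and the cyclic term `ω(u_n, u_1)` combine to
`ω(v_n, (1 - 2c) w) = ω(v_n, ζ^q w)` plus `2 ω(w, c w) = Im(ζ^q) ‖w‖²` (`rinner_closing`).
With `θ = qπ/p` the latter is `sin(2θ) ‖w‖² = 2 tan θ · cos² θ ‖w‖²`, and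
`u_1 = ((1 + ζ^q)/2) w` has norm `|cos θ| ‖w‖`; here `|q| ≤ (p-1)/2` gives `cos θ ≠ 0`.
-/

open scoped BigOperators

/-- `ζ = e^{2πi/p}`. -/
noncomputable def zeta (p : ℕ) : ℂ := Complex.exp (2 * Real.pi * Complex.I / p)

/-- The change of variables `u_k := v_k + (−1)^k ((1−ζ^q)/2)·v_1`
(in 0-based indexing the sign is `(−1)^{k+1}`). -/
noncomputable def uTwist (d n : ℕ) (hpos : 0 < n) (zq : ℂ)
    (v : Fin n → (Fin (d + 1) → ℂ)) : Fin n → (Fin (d + 1) → ℂ) :=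
  fun k => v k + (((-1 : ℂ) ^ ((k : ℕ) + 1)) * ((1 - zq) / 2)) • v ⟨0, hpos⟩

lemma rinner_step {d : ℕ} (s : ℝ) (c : ℂ) (x y w : Fin (d + 1) → ℂ) :
    rinner (x + ((s : ℂ) * c) • w) (Complex.I • (y + (((-s : ℝ) : ℂ) * c) • w))
      = rinner x (Complex.I • y)
        + ((-s) * rinner y (Complex.I • c • w) - s * rinner x (Complex.I • c • w)) := by
  unfold rinner
  simp only [Finset.mul_sum, ← Finset.sum_add_distrib, ← Finset.sum_sub_distrib]
  refine Finset.sum_congr rfl fun j _ => ?_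
  simp
  ring

/-- The cyclic term `ω(u_n, u_1)` together with the boundary terms of the telescoping sum. The
hypothesis on `t` holds for `z = e^{2iθ}` and `t = tan θ`. -/
lemma rinner_closing {d : ℕ} (z : ℂ) (t : ℝ) (x w : Fin (d + 1) → ℂ)
    (ht : 2 * t * Complex.normSq ((1 + z) / 2) = z.im) :
    rinner x (Complex.I • z • w)
      = rinner (x + (((-1 : ℝ) : ℂ) * ((1 - z) / 2)) • w)
          (Complex.I • (w + (((-1 : ℝ) : ℂ) * ((1 - z) / 2)) • w))
        + (-1 * rinner x (Complex.I • ((1 - z) / 2) • w)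
            - -1 * rinner w (Complex.I • ((1 - z) / 2) • w))
        - 2 * t * rinner (w + (((-1 : ℝ) : ℂ) * ((1 - z) / 2)) • w)
            (w + (((-1 : ℝ) : ℂ) * ((1 - z) / 2)) • w) := by
  have hu : w + (((-1 : ℝ) : ℂ) * ((1 - z) / 2)) • w = ((1 + z) / 2) • w := by
    ext j
    simp
    ring
  have hsq : 2 * t * rinner (((1 + z) / 2) • w) (((1 + z) / 2) • w)
      = z.im * ∑ j, Complex.normSq (w j) := by
    rw [← ht]
    unfold rinner
    simp only [Complex.mul_conj, Complex.ofReal_re, Pi.smul_apply, smul_eq_mul,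
      Complex.normSq_mul, Finset.mul_sum]
    exact Finset.sum_congr rfl fun j _ => by ring
  rw [hu, hsq]
  unfold rinner
  simp only [Finset.mul_sum, ← Finset.sum_add_distrib, ← Finset.sum_sub_distrib]
  refine Finset.sum_congr rfl fun j _ => ?_
  simp [Complex.normSq_apply, Complex.div_re, Complex.div_im]
  ring

lemma zeta_zpow (p : ℕ) (q : ℤ) :
    zeta p ^ q = Complex.exp (((2 * (q * Real.pi / p) : ℝ) : ℂ) * Complex.I) := by
  rw [zeta, ← Complex.exp_int_mul]
  congr 1
  push_cast
  ring

lemma two_tan_mul_normSq (θ : ℝ) (h : Real.cos θ ≠ 0) :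
    2 * Real.tan θ
        * Complex.normSq ((1 + Complex.exp (((2 * θ : ℝ) : ℂ) * Complex.I)) / 2)
      = (Complex.exp (((2 * θ : ℝ) : ℂ) * Complex.I)).im := by
  have h1 := Real.sin_sq_add_cos_sq θ
  have hn : Complex.normSq ((1 + Complex.exp (((2 * θ : ℝ) : ℂ) * Complex.I)) / 2)
      = Real.cos θ ^ 2 := by
    rw [Complex.normSq_div, Complex.normSq_apply, Complex.add_re, Complex.add_im,
      Complex.exp_ofReal_mul_I_re, Complex.exp_ofReal_mul_I_im, Real.cos_two_mul,
      Real.sin_two_mul]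
    simp
    linear_combination Real.cos θ ^ 2 * h1
  rw [hn, Complex.exp_ofReal_mul_I_im, Real.sin_two_mul, Real.tan_eq_sin_div_cos]
  field_simp

lemma cos_ne_zero_of_abs_le (p : ℕ) (hp : 3 ≤ p) (q : ℤ)
    (hq : (|q| : ℝ) ≤ ((p : ℝ) - 1) / 2) : Real.cos (q * Real.pi / p) ≠ 0 := by
  have hp0 : (0 : ℝ) < p := by
    have : 0 < p := by omega
    exact_mod_cast this
  obtain ⟨h1, h2⟩ := abs_le.mp hq
  have hpi := Real.pi_pos
  refine (Real.cos_pos_of_mem_Ioo ⟨?_, ?_⟩).ne'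
  · rw [lt_div_iff₀ hp0]
    nlinarith
  · rw [div_lt_iff₀ hp0]
    nlinarith

lemma sum_fin_telescope (m : ℕ) (g : Fin (m + 1) → ℝ) :
    ∑ k : Fin m, (g k.succ - g k.castSucc) = g (Fin.last m) - g 0 := by
  have h := (Fin.sum_univ_succ g).symm.trans (Fin.sum_univ_castSucc g)
  rw [Finset.sum_sub_distrib]
  linarith

lemma csucc_castSucc {m : ℕ} (k : Fin m) : csucc k.castSucc = k.succ := by
  ext
  simp [csucc, Nat.mod_eq_of_lt]

lemma csucc_last (m : ℕ) : csucc (Fin.last m) = 0 := by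
  ext
  simp [csucc]

/-- For odd `n ≥ 1`, `p ≥ 3` and `|q| ≤ (p−1)/2`, with `ζ = e^{2πi/p}` and
`u_k := v_k + (−1)^k ((1−ζ^q)/2)·v_1` (cyclic convention `u_{n+1} := u_1`):
`∑_{k=1}^{n−1} ⟨v_k, i v_{k+1}⟩ + ⟨v_n, i ζ^q v_1⟩
  = ∑_{k=1}^{n} ⟨u_k, i u_{k+1}⟩ − 2 tan(qπ/p) ‖u_1‖²`. -/
theorem twisted_quadratic_identity (d n : ℕ) (hn : Odd n) (p : ℕ) (hp : 3 ≤ p)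
    (q : ℤ) (hq : (|q| : ℝ) ≤ ((p : ℝ) - 1) / 2) (v : Fin n → (Fin (d + 1) → ℂ)) :
    (∑ k ∈ Finset.univ.filter (fun k : Fin n => (k : ℕ) + 1 < n),
        rinner (v k) (Complex.I • v (csucc k)))
      + rinner (v ⟨n - 1, Nat.sub_lt hn.pos Nat.one_pos⟩)
          (Complex.I • (zeta p ^ q) • v ⟨0, hn.pos⟩)
    = (∑ k : Fin n, rinner (uTwist d n hn.pos (zeta p ^ q) v k)
          (Complex.I • uTwist d n hn.pos (zeta p ^ q) v (csucc k)))
      - 2 * Real.tan (q * Real.pi / p) *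
          rinner (uTwist d n hn.pos (zeta p ^ q) v ⟨0, hn.pos⟩)
                 (uTwist d n hn.pos (zeta p ^ q) v ⟨0, hn.pos⟩) := by
  have ht := two_tan_mul_normSq _ (cos_ne_zero_of_abs_le p hp q hq)
  rw [← zeta_zpow] at ht
  generalize zeta p ^ q = z at ht ⊢
  generalize Real.tan (q * Real.pi / p) = t at ht ⊢
  obtain ⟨m, rfl⟩ : ∃ m, n = m + 1 := ⟨n - 1, (Nat.succ_pred_eq_of_pos hn.pos).symm⟩
  have hsign : (-1 : ℝ) ^ (m + 1) = -1 := hn.neg_one_pow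
  have hu : ∀ k, uTwist d (m + 1) (Nat.succ_pos m) z v k
      = v k + ((((-1 : ℝ) ^ ((k : ℕ) + 1) : ℝ) : ℂ) * ((1 - z) / 2)) • v 0 := by
    intro k
    simp [uTwist]
  have hstep : ∀ k : Fin m,
      rinner (uTwist d (m + 1) (Nat.succ_pos m) z v k.castSucc)
        (Complex.I • uTwist d (m + 1) (Nat.succ_pos m) z v k.succ)
      = rinner (v k.castSucc) (Complex.I • v k.succ)
        + ((-1 : ℝ) ^ ((k.succ : ℕ) + 1)
              * rinner (v k.succ) (Complex.I • ((1 - z) / 2) • v 0)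
          - (-1 : ℝ) ^ ((k.castSucc : ℕ) + 1)
              * rinner (v k.castSucc) (Complex.I • ((1 - z) / 2) • v 0)) := by
    intro k
    have hs : (-1 : ℝ) ^ ((k.succ : ℕ) + 1) = -(-1 : ℝ) ^ ((k.castSucc : ℕ) + 1) := by
      simp [pow_succ]
    rw [hu, hu, hs]
    exact rinner_step _ _ _ _ _
  have htel := sum_fin_telescope m fun k =>
    (-1 : ℝ) ^ ((k : ℕ) + 1) * rinner (v k) (Complex.I • ((1 - z) / 2) • v 0)
  have hclose := rinner_closing z t (v (Fin.last m)) (v 0) ht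
  have hfilter : ∑ k ∈ Finset.univ.filter (fun k : Fin (m + 1) => (k : ℕ) + 1 < m + 1),
      rinner (v k) (Complex.I • v (csucc k))
      = ∑ k : Fin m, rinner (v k.castSucc) (Complex.I • v k.succ) := by
    rw [Finset.sum_filter, Fin.sum_univ_castSucc]
    simp [csucc_castSucc]
  have hlast : (⟨m + 1 - 1, Nat.sub_lt (Nat.succ_pos m) Nat.one_pos⟩ : Fin (m + 1))
      = Fin.last m := rfl
  have hzero : (⟨0, Nat.succ_pos m⟩ : Fin (m + 1)) = 0 := rfl
  rw [hfilter, hlast, hzero, Fin.sum_univ_castSucc, csucc_last]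
  simp only [csucc_castSucc, hstep, Finset.sum_add_distrib]
  rw [htel, hu, hu]
  simp only [Fin.val_last, Fin.val_zero, hsign, zero_add, pow_one]
  linarith [hclose]
end
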